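/- Fix integers n, m with 1 ≤ m ≤ (n+1)/2, let P := Y_{m,n−m+1} with I-coloring κ((i,j)) := j − i + m, and let Y be an order filter of P and k ∈ {1,…,n}. Then k ∈ 𝓘(Y) and k+1 ∉ 𝓘(Y) if and only if Y ⊊ S_k(Y). -/

import Mathlib

/-!
Since `R_c(F) ⊆ F ⊆ A_c(F)`, the filter `F` grows under `S_c` exactly when `R_c(F) = F` and
`F ≠ A_c(F)`. Suppose that `κ` separates the two ends of every cover and that color classes are
chains. Then every element of `A_c(F) \ F` can be added to `F` on its own, since a cover of it
outside `F` would also have color `c`. Conversely, once some `x` of color `c` can be added, `R_c`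
removes nothing: an element of `F` of color `c` lies above `x`, hence above a cover of `x`, which
belongs to `F` and has another color. On a rectangle, the cell following row `i` can be added when
all earlier rows are strictly longer, which says that no row contributes the successor of the
element of `𝓘(Y)` coming from row `i`.
-/

/-- `F` is an order filter of the poset `α`: upward closed subset. -/
def IsOrderFilter {α : Type*} [PartialOrder α] (F : Set α) : Prop :=
  ∀ ⦃x y : α⦄, x ∈ F → x ≤ y → y ∈ F

/-- `A_c(F)`: the union of all order filters `F'` with `F' \ F ⊆ κ⁻¹({c})`. -/
def Aop {α C : Type*} [PartialOrder α] (κ : α → C) (c : C) (F : Set α) : Set α :=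
  ⋃₀ {F' : Set α | IsOrderFilter F' ∧ F' \ F ⊆ κ ⁻¹' {c}}

/-- `R_c(F)`: the intersection of all order filters `F'` with `F \ F' ⊆ κ⁻¹({c})`. -/
def Rop {α C : Type*} [PartialOrder α] (κ : α → C) (c : C) (F : Set α) : Set α :=
  ⋂₀ {F' : Set α | IsOrderFilter F' ∧ F \ F' ⊆ κ ⁻¹' {c}}

open Classical in
/-- `S_c(F) := (A_c(F) \ F) ∪ R_c(F)` if this is an order filter, and `F` otherwise. -/
noncomputable def Sop {α C : Type*} [PartialOrder α] (κ : α → C) (c : C) (F : Set α) : Set α :=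
  if IsOrderFilter ((Aop κ c F \ F) ∪ Rop κ c F) then (Aop κ c F \ F) ∪ Rop κ c F else F

/-- The rectangular Young diagram poset `Y_{m,N}` (cells `(i,j)`, `1 ≤ i ≤ m`,
`1 ≤ j ≤ N`, with `(i₁,j₁) ≤ (i₂,j₂)` iff `i₁ ≥ i₂` and `j₁ ≥ j₂`), realized as the
product of two dual finite chains. -/
abbrev YD (m N : ℕ) := (Fin m)ᵒᵈ × (Fin N)ᵒᵈ

/-- The `I`-coloring of `Y_{m, n−m+1}` for type `A_n`: `κ((i,j)) = j − i + m`
(in 1-indexed coordinates), with values in `{1,…,n}`. -/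
def ykappa (m N : ℕ) (x : YD m N) : ℤ :=
  ((OrderDual.ofDual x.2 : Fin N) : ℤ) - ((OrderDual.ofDual x.1 : Fin m) : ℤ) + m

/-- The length `𝐤_i` of row `i` of a subset `Y` of `Y_{m,N}`:
the number of cells of `Y` in row `i`. -/
noncomputable def rowLen (m N : ℕ) (Y : Set (YD m N)) (i : Fin m) : ℕ :=
  Set.ncard {j : Fin N | (OrderDual.toDual i, OrderDual.toDual j) ∈ Y}

/-- `𝓘(Y) := {𝐤_i + m + 1 − i : 1 ≤ i ≤ m} ⊆ {1,…,n+1}` (here the row index `i`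
is 0-indexed, so the element for row `i` is `𝐤_i + m − i`). -/
def ISet (m N : ℕ) (Y : Set (YD m N)) : Set ℤ :=
  {z : ℤ | ∃ i : Fin m, z = (rowLen m N Y i : ℤ) + m - (i : ℤ)}

section Poset

variable {α C : Type*} [PartialOrder α] {κ : α → C} {c : C} {F : Set α} {x : α}

theorem mem_Aop_iff : x ∈ Aop κ c F ↔ ∀ y, x ≤ y → y ∉ F → κ y = c := by
  constructor
  · rintro ⟨G, ⟨hG, hGF⟩, hx⟩ y hxy hy
    exact hGF ⟨hG hx hxy, hy⟩
  · intro h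
    exact ⟨Set.Ici x, ⟨fun _ _ hy hyz ↦ le_trans hy hyz, fun y hy ↦ h y hy.1 hy.2⟩, le_rfl⟩

theorem mem_Rop_iff : x ∈ Rop κ c F ↔ ∃ y ∈ F, κ y ≠ c ∧ y ≤ x := by
  constructor
  · intro h
    refine h {z | ∃ y ∈ F, κ y ≠ c ∧ y ≤ z} ⟨?_, ?_⟩
    · rintro z w ⟨y, hy, hyc, hyz⟩ hzw
      exact ⟨y, hy, hyc, hyz.trans hzw⟩
    · rintro y ⟨hyF, hy⟩
      by_contra hyc
      exact hy ⟨y, hyF, hyc, le_rfl⟩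
  · rintro ⟨y, hy, hyc, hyx⟩ G ⟨hG, hFG⟩
    have hyG : y ∈ G := by
      by_contra hyG
      exact hyc (hFG ⟨hy, hyG⟩)
    exact hG hyG hyx

theorem isOrderFilter_Aop (κ : α → C) (c : C) (F : Set α) : IsOrderFilter (Aop κ c F) :=
  fun _ _ ⟨G, hG, hx⟩ hxy ↦ ⟨G, hG, hG.1 hx hxy⟩

theorem IsOrderFilter.subset_Aop (hF : IsOrderFilter F) : F ⊆ Aop κ c F :=
  fun _ hx ↦ mem_Aop_iff.2 fun _ hxy hy ↦ absurd (hF hx hxy) hy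

theorem IsOrderFilter.Rop_subset (hF : IsOrderFilter F) : Rop κ c F ⊆ F := by
  intro x hx
  obtain ⟨y, hy, -, hyx⟩ := mem_Rop_iff.1 hx
  exact hF hy hyx

theorem IsOrderFilter.ssubset_Sop_iff (hF : IsOrderFilter F) :
    F ⊂ Sop κ c F ↔ F ⊆ Rop κ c F ∧ F ⊂ Aop κ c F := by
  have Sop_eq_Aop (hR : F ⊆ Rop κ c F) : Sop κ c F = Aop κ c F := by
    rw [Sop, hF.Rop_subset.antisymm hR, Set.sdiff_union_of_subset hF.subset_Aop,
      if_pos (isOrderFilter_Aop κ c F)]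
  constructor
  · intro h
    have hR : F ⊆ Rop κ c F := by
      intro x hx
      have hxS := h.subset hx
      rw [Sop] at hxS
      split_ifs at hxS with hfilter
      · exact hxS.resolve_left fun hxA ↦ hxA.2 hx
      · rw [Sop, if_neg hfilter] at h
        exact absurd h (ssubset_irrefl F)
    exact ⟨hR, Sop_eq_Aop hR ▸ h⟩
  · rintro ⟨hR, hA⟩
    rwa [Sop_eq_Aop hR]

/-- `x` is an addable element of the order filter `F`: `x ∉ F` and `F ∪ {x}` is an order filter,
the latter encoded as `F` containing everything strictly above `x`. For Young diagrams these are
the addable boxes. -/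
def IsAddable (F : Set α) (x : α) : Prop :=
  x ∉ F ∧ Set.Ioi x ⊆ F

theorem IsAddable.mem_Aop (hx : IsAddable F x) : x ∈ Aop κ (κ x) F := by
  refine mem_Aop_iff.2 fun y hxy hy ↦ ?_
  obtain rfl | hlt := hxy.eq_or_lt
  · rfl
  · exact absurd (hx.2 hlt) hy

theorem isAddable_of_mem_Aop [IsStronglyAtomic α] (hF : IsOrderFilter F)
    (hκ : ∀ ⦃y z⦄, y ⋖ z → κ y ≠ κ z) (hx : x ∈ Aop κ c F) (hxF : x ∉ F) :
    IsAddable F x := by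
  refine ⟨hxF, fun y hxy ↦ ?_⟩
  by_contra hy
  obtain ⟨z, hxz, hzy⟩ := exists_covBy_le_of_lt hxy
  have hz : z ∉ F := fun hz ↦ hy (hF hz hzy)
  rw [mem_Aop_iff] at hx
  exact hκ hxz ((hx x le_rfl hxF).trans (hx z hxz.le hz).symm)

theorem IsAddable.subset_Rop [IsStronglyAtomic α] (hF : IsOrderFilter F)
    (hκ : ∀ ⦃y z⦄, y ⋖ z → κ y ≠ κ z) (hchain : IsChain (· ≤ ·) (κ ⁻¹' {κ x}))
    (hx : IsAddable F x) : F ⊆ Rop κ (κ x) F := by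
  refine fun y hy ↦ mem_Rop_iff.2 ?_
  by_cases hyx : κ y = κ x
  · have hlt : x < y := by
      have hne : x ≠ y := fun h ↦ hx.1 (h ▸ hy)
      have hle : x ≤ y :=
        (hchain.total rfl hyx).resolve_right fun hle ↦ hx.1 (hF hy hle)
      exact hle.lt_of_ne hne
    obtain ⟨z, hxz, hzy⟩ := exists_covBy_le_of_lt hlt
    exact ⟨z, hx.2 hxz.lt, (hκ hxz).symm, hzy⟩
  · exact ⟨y, hy, hyx, le_rfl⟩

theorem IsOrderFilter.ssubset_Sop_iff_exists_isAddable [IsStronglyAtomic α]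
    (hF : IsOrderFilter F) (hκ : ∀ ⦃y z⦄, y ⋖ z → κ y ≠ κ z)
    (hchain : IsChain (· ≤ ·) (κ ⁻¹' {c})) :
    F ⊂ Sop κ c F ↔ ∃ x, κ x = c ∧ IsAddable F x := by
  rw [hF.ssubset_Sop_iff]
  constructor
  · rintro ⟨-, hA⟩
    obtain ⟨x, hx, hxF⟩ := Set.exists_of_ssubset hA
    exact ⟨x, mem_Aop_iff.1 hx x le_rfl hxF, isAddable_of_mem_Aop hF hκ hx hxF⟩
  · rintro ⟨x, rfl, hx⟩
    exact ⟨hx.subset_Rop hF hκ hchain,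
      Set.ssubset_iff_of_subset hF.subset_Aop |>.2 ⟨x, hx.mem_Aop, hx.1⟩⟩

end Poset

section Rectangle

open OrderDual

variable {m N : ℕ} {Y : Set (YD m N)}

theorem ykappa_ne_of_covBy {x y : YD m N} (h : x ⋖ y) : ykappa m N x ≠ ykappa m N y := by
  obtain ⟨i, j⟩ := x
  obtain ⟨i', j'⟩ := y
  simp only [ykappa]
  obtain ⟨hcov, rfl⟩ | ⟨hcov, rfl⟩ := Prod.mk_covBy_mk_iff.1 h
  all_goals
    have hsucc := Nat.covBy_iff_add_one_eq.1 (Fin.covBy_iff.1 hcov.ofDual)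
    omega

theorem isChain_ykappa_preimage_singleton (k : ℤ) :
    IsChain (· ≤ ·) (ykappa m N ⁻¹' {k}) := by
  rintro ⟨i, j⟩ hx ⟨i', j'⟩ hy -
  simp only [Set.mem_preimage, Set.mem_singleton_iff, ykappa] at hx hy
  simp only [Prod.mk_le_mk, ← ofDual_le_ofDual, Fin.le_def]
  omega

theorem rowLen_le (Y : Set (YD m N)) (i : Fin m) : rowLen m N Y i ≤ N := by
  simpa [rowLen] using Set.ncard_le_card {j : Fin N | (toDual i, toDual j) ∈ Y}

theorem IsOrderFilter.rowLen_antitone (hY : IsOrderFilter Y) : Antitone (rowLen m N Y) :=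
  fun _ _ hle ↦ Set.ncard_le_ncard fun _ hj ↦ hY hj ⟨hle, le_rfl⟩

theorem IsOrderFilter.mem_iff_lt_rowLen (hY : IsOrderFilter Y) (i : Fin m) (j : Fin N) :
    (toDual i, toDual j) ∈ Y ↔ (j : ℕ) < rowLen m N Y i := by
  constructor
  · intro h
    have hsub : Set.Iic j ⊆ {j' : Fin N | (toDual i, toDual j') ∈ Y} :=
      fun j' hj' ↦ hY h ⟨le_rfl, hj'⟩
    have hcard := Set.ncard_le_ncard hsub
    rwa [← Finset.coe_Iic, Set.ncard_coe_finset, Fin.card_Iic] at hcard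
  · intro h
    by_contra hj
    have hsub : {j' : Fin N | (toDual i, toDual j') ∈ Y} ⊆ Set.Iio j :=
      fun j' hj' ↦ lt_of_not_ge fun hle ↦ hj (hY hj' ⟨le_rfl, hle⟩)
    have hcard := Set.ncard_le_ncard hsub
    rw [← Finset.coe_Iio, Set.ncard_coe_finset, Fin.card_Iio] at hcard
    exact hcard.not_gt h

theorem IsOrderFilter.isAddable_iff (hY : IsOrderFilter Y) (i : Fin m) (j : Fin N) :
    IsAddable Y (toDual i, toDual j) ↔
      (j : ℕ) = rowLen m N Y i ∧ ∀ i' < i, rowLen m N Y i < rowLen m N Y i' := by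
  rw [IsAddable, hY.mem_iff_lt_rowLen, not_lt]
  constructor
  · rintro ⟨hle, habove⟩
    have hge : (j : ℕ) ≤ rowLen m N Y i := by
      by_contra! hlt
      let j' : Fin N := ⟨rowLen m N Y i, hlt.trans j.2⟩
      have hj' : (toDual i, toDual j') ∈ Y := habove (Prod.mk_lt_mk_iff_right.2 hlt)
      exact lt_irrefl _ ((hY.mem_iff_lt_rowLen i j').1 hj')
    refine ⟨hge.antisymm hle, fun i' hi' ↦ hle.trans_lt ?_⟩
    exact (hY.mem_iff_lt_rowLen i' j).1 (habove (Prod.mk_lt_mk_iff_left.2 hi'))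
  · rintro ⟨hj, hlonger⟩
    refine ⟨hj.ge, fun ⟨i', j'⟩ hlt ↦ (hY.mem_iff_lt_rowLen (ofDual i') (ofDual j')).2 ?_⟩
    obtain ⟨hi', hj'⟩ | ⟨hi', hj'⟩ := Prod.mk_lt_mk.1 hlt
    · exact (Fin.le_def.1 hj').trans_lt (hj.trans_lt (hlonger _ hi'))
    · exact (Fin.lt_def.1 hj').trans_le (hj.trans_le (hY.rowLen_antitone hi'))

theorem IsOrderFilter.add_one_mem_ISet_iff (hY : IsOrderFilter Y) (i : Fin m) :
    (rowLen m N Y i + m - i : ℤ) + 1 ∈ ISet m N Y ↔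
      ∃ i' < i, rowLen m N Y i' = rowLen m N Y i := by
  constructor
  · rintro ⟨i', hi'⟩
    have hlt : i' < i := by
      by_contra! hle
      have hlen := hY.rowLen_antitone hle
      rw [Fin.le_def] at hle
      omega
    have hlen := hY.rowLen_antitone hlt.le
    exact ⟨i', hlt, by rw [Fin.lt_def] at hlt; omega⟩
  · rintro ⟨i', hi', heq⟩
    obtain ⟨p, hp⟩ : ∃ p : Fin m, (p : ℕ) + 1 = i :=
      ⟨⟨i - 1, by omega⟩, Nat.sub_add_cancel (Nat.one_le_of_lt hi')⟩
    have hlen_p : rowLen m N Y p = rowLen m N Y i :=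
      le_antisymm (heq ▸ hY.rowLen_antitone (Fin.le_def.2 (by omega)))
        (hY.rowLen_antitone (Fin.le_def.2 (by omega)))
    exact ⟨p, by omega⟩

theorem IsOrderFilter.mem_ISet_and_add_one_notMem_iff (hY : IsOrderFilter Y) (k : ℤ) :
    k ∈ ISet m N Y ∧ k + 1 ∉ ISet m N Y ↔
      ∃ i : Fin m, k = rowLen m N Y i + m - i ∧ ∀ i' < i, rowLen m N Y i < rowLen m N Y i' := by
  have add_one_notMem_iff (i : Fin m) : (rowLen m N Y i + m - i : ℤ) + 1 ∉ ISet m N Y ↔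
      ∀ i' < i, rowLen m N Y i < rowLen m N Y i' := by
    rw [hY.add_one_mem_ISet_iff]
    push Not
    exact forall₂_congr fun i' hi' ↦ (hY.rowLen_antitone hi'.le).lt_iff_ne'.symm
  constructor
  · rintro ⟨⟨i, rfl⟩, hk⟩
    exact ⟨i, rfl, (add_one_notMem_iff i).1 hk⟩
  · rintro ⟨i, rfl, hlonger⟩
    exact ⟨⟨i, rfl⟩, (add_one_notMem_iff i).2 hlonger⟩

theorem IsOrderFilter.exists_isAddable_ykappa_eq_iff (hY : IsOrderFilter Y) {k : ℤ}
    (hk : k ≠ m + N) :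
    (∃ x, ykappa m N x = k ∧ IsAddable Y x) ↔
      ∃ i : Fin m, k = rowLen m N Y i + m - i ∧ ∀ i' < i, rowLen m N Y i < rowLen m N Y i' := by
  constructor
  · rintro ⟨⟨i, j⟩, rfl, hx⟩
    obtain ⟨hj, hlonger⟩ := (hY.isAddable_iff (ofDual i) (ofDual j)).1 hx
    exact ⟨ofDual i, by simp only [ykappa]; omega, hlonger⟩
  · rintro ⟨i, hi, hlonger⟩
    have hlt : rowLen m N Y i < N := by
      refine (rowLen_le Y i).lt_of_ne fun hfull ↦ ?_
      obtain hzero | hpos := Nat.eq_zero_or_pos i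
      · omega
      · have := hlonger ⟨0, i.pos⟩ hpos
        exact (rowLen_le Y _).not_gt (hfull ▸ this)
    refine ⟨(toDual i, toDual ⟨rowLen m N Y i, hlt⟩), ?_, (hY.isAddable_iff _ _).2 ⟨rfl, hlonger⟩⟩
    simp only [ykappa, ofDual_toDual]
    omega

end Rectangle

theorem ISet_iff_Sop_gt_general {m N : ℕ} {Y : Set (YD m N)} (hY : IsOrderFilter Y)
    {k : ℤ} (hk : k ≠ m + N) :
    (k ∈ ISet m N Y ∧ k + 1 ∉ ISet m N Y) ↔ Y ⊂ Sop (ykappa m N) k Y := by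
  rw [hY.ssubset_Sop_iff_exists_isAddable (fun _ _ ↦ ykappa_ne_of_covBy)
      (isChain_ykappa_preimage_singleton k),
    hY.exists_isAddable_ykappa_eq_iff hk, hY.mem_ISet_and_add_one_notMem_iff]

/-- For an order filter `Y` of `Y_{m,n−m+1}` and `k ∈ {1,…,n}`:
`k ∈ 𝓘(Y)` and `k+1 ∉ 𝓘(Y)` if and only if `Y ⊊ S_k(Y)`. -/
theorem ISet_iff_Sop_gt (n m : ℕ) (hm : 1 ≤ m) (hmn : 2 * m ≤ n + 1)
    (Y : Set (YD m (n - m + 1))) (hY : IsOrderFilter Y)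
    (k : ℤ) (hk1 : 1 ≤ k) (hkn : k ≤ n) :
    (k ∈ ISet m (n - m + 1) Y ∧ k + 1 ∉ ISet m (n - m + 1) Y) ↔
      Y ⊂ Sop (ykappa m (n - m + 1)) k Y := by
  exact ISet_iff_Sop_gt_general hY (by omega)
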